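/- arXiv:1509.00279 — 6 statements merged into one kernel-verified Lean document; each statement's English description precedes it below -/
import Mathlib

section
/- Let q be a prime power, m ≥ 1, and d ≥ 0. Every polynomial F ∈ F_q[X_1,...,X_m] of total degree at most d can be written as F = Σ_{j : |j| ≤ d/q} F_j · V_j, where the sum ranges over multi-indices j = (j_1,...,j_m) ∈ ℕ^m with |j| = j_1 + ... + j_m ≤ d/q, each F_j ∈ F_q[X_1,...,X_m] has total degree at most d_j := min(m(q−1), d − |j|·q), and V_j := ∏_{i=1}^m (X_i^q − X_i)^{j_i}. -/
/-!
Call a polynomial decomposable if it has an expansion of the required shape for the bound `d`;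
decomposable polynomials are closed under addition. The key claim (`decomposable_monomial_mul_Vj`)
is that `c X^a V_j` is decomposable whenever `|a| + |j| q ≤ d`, by strong induction on `|a|`.
If every exponent of `a` is below `q`, the product is already an expansion with one term, as
`|a| ≤ m (q - 1)`. Otherwise `a = b + q e_i` for some `i`, and
`X^a V_j = X^b V_{j + e_i} + X^(b + e_i) V_j`; both terms have smaller exponents (as `q ≥ 2`) and
still satisfy the weight bound. The case `j = 0`, applied to each monomial of `F`, finishes.
-/


open MvPolynomial

/-- `Vj q j = ∏ i (X i ^ q - X i) ^ (j i)` -/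
noncomputable def Vj {K : Type} [CommRing K] {m : ℕ} (q : ℕ) (j : Fin m →₀ ℕ) :
    MvPolynomial (Fin m) K :=
  ∏ i : Fin m, (X i ^ q - X i) ^ (j i)

/-- Multi-indices `j ∈ ℕ^m` with `|j| ≤ b`. -/
noncomputable def multiIdx (m b : ℕ) : Finset (Fin m →₀ ℕ) :=
  (Finset.Iic (Finsupp.equivFunOnFinite.symm fun _ => b)).filter
    (fun j => (∑ l, j l) ≤ b)

/-- `F` has an expansion `∑ F_j V_j` over `|j| ≤ d / q` with `deg F_j ≤ min (m(q-1)) (d - |j|q)`. -/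
def Decomposable {K : Type} [Field K] {m : ℕ} (q d : ℕ) (F : MvPolynomial (Fin m) K) : Prop :=
  ∃ Fj : (Fin m →₀ ℕ) → MvPolynomial (Fin m) K,
    (∀ j : Fin m →₀ ℕ, (∑ l, j l) ≤ d / q →
      (Fj j).totalDegree ≤ min (m * (q - 1)) (d - (∑ l, j l) * q)) ∧
    F = ∑ j ∈ multiIdx m (d / q), Fj j * Vj q j

theorem Decomposable.zero {K : Type} [Field K] {m : ℕ} (q d : ℕ) :
    Decomposable q d (0 : MvPolynomial (Fin m) K) :=
  ⟨fun _ => 0, by simp, by simp⟩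

theorem Decomposable.add {K : Type} [Field K] {m q d : ℕ} {F G : MvPolynomial (Fin m) K}
    (hF : Decomposable q d F) (hG : Decomposable q d G) : Decomposable q d (F + G) := by
  obtain ⟨f, hf, rfl⟩ := hF
  obtain ⟨g, hg, rfl⟩ := hG
  refine ⟨fun j => f j + g j, fun j hj => ?_, ?_⟩
  · exact (totalDegree_add _ _).trans (max_le (hf j hj) (hg j hj))
  · simp only [add_mul, Finset.sum_add_distrib]

theorem mem_multiIdx {m b : ℕ} {j : Fin m →₀ ℕ} : j ∈ multiIdx m b ↔ ∑ l, j l ≤ b := by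
  simp only [multiIdx, Finset.mem_filter, Finset.mem_Iic, and_iff_right_iff_imp]
  intro h l
  exact (Finset.single_le_sum (fun i _ => Nat.zero_le (j i)) (Finset.mem_univ l)).trans h

theorem Vj_add_single {K : Type} [CommRing K] {m : ℕ} (q : ℕ) (j : Fin m →₀ ℕ) (i : Fin m) :
    (Vj q (j + Finsupp.single i 1) : MvPolynomial (Fin m) K) = Vj q j * (X i ^ q - X i) := by
  simp only [Vj, Finsupp.add_apply, pow_add, Finset.prod_mul_distrib]
  congr 1
  rw [Finset.prod_eq_single i]
  · simp
  · intro b _ hb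
    simp [hb.symm]
  · simp

theorem sum_add_single {m : ℕ} (a : Fin m →₀ ℕ) (i : Fin m) (n : ℕ) :
    ∑ l, (a + Finsupp.single i n) l = (∑ l, a l) + n := by
  simp [Finset.sum_add_distrib, Finsupp.single_apply]

/-- Rewriting `X_i^q = (X_i^q - X_i) + X_i` in a monomial divisible by `X_i^q`. -/
theorem monomial_mul_Vj_reduce {K : Type} [Field K] {m : ℕ} (q : ℕ) (b j : Fin m →₀ ℕ)
    (i : Fin m) (c : K) :
    monomial (b + Finsupp.single i q) c * Vj q j =
      monomial b c * Vj q (j + Finsupp.single i 1) +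
        monomial (b + Finsupp.single i 1) c * Vj q j := by
  rw [Vj_add_single, monomial_add_single, monomial_add_single]
  ring

/-- The induction runs on `n = |a|`: each reduction step lowers `|a|` without increasing the
weight `|a| + |j| q`. -/
theorem decomposable_monomial_mul_Vj {K : Type} [Field K] {m q d : ℕ} (hq : 2 ≤ q) (c : K)
    (n : ℕ) : ∀ a j : Fin m →₀ ℕ, ∑ l, a l = n → n + (∑ l, j l) * q ≤ d →
      Decomposable q d (monomial a c * Vj q j) := by
  induction n using Nat.strong_induction_on with
  | _ n ih =>
    intro a j ha hd
    by_cases hlt : ∀ i, a i < q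
    · have hj : ∑ l, j l ≤ d / q := (Nat.le_div_iff_mul_le (by omega)).2 (by omega)
      have hn : n ≤ m * (q - 1) := by
        rw [← ha]
        simpa using Finset.sum_le_card_nsmul Finset.univ (fun l => a l) (q - 1)
          (fun l _ => Nat.le_sub_one_of_lt (hlt l))
      have hdeg : (monomial a c).totalDegree ≤ n := by
        refine (totalDegree_monomial_le a c).trans ?_
        rw [Finsupp.sum_fintype _ _ (fun _ => rfl)]
        exact ha.le
      refine ⟨Pi.single j (monomial a c), fun k _ => ?_, ?_⟩
      · by_cases hk : k = j
        · subst hk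
          rw [Pi.single_eq_same]
          exact hdeg.trans (le_min hn (by omega))
        · simp [Pi.single_eq_of_ne hk]
      · rw [Finset.sum_eq_single_of_mem j (mem_multiIdx.2 hj)]
        · rw [Pi.single_eq_same]
        · intro k _ hk
          rw [Pi.single_eq_of_ne hk, zero_mul]
    · push Not at hlt
      obtain ⟨i, hi⟩ := hlt
      obtain ⟨b, rfl⟩ : ∃ b, a = b + Finsupp.single i q :=
        ⟨a - Finsupp.single i q, (tsub_add_cancel_of_le (Finsupp.single_le_iff.2 hi)).symm⟩
      rw [sum_add_single] at ha
      rw [monomial_mul_Vj_reduce]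
      refine (ih (∑ l, b l) (by omega) b _ rfl ?_).add
        (ih ((∑ l, b l) + 1) (by omega) _ j (sum_add_single b i 1) (by omega))
      rw [sum_add_single, add_mul]
      omega

/-- Every `F ∈ F_q[X_1,…,X_m]` of total degree at most `d` can be written as
`F = Σ_{|j| ≤ d/q} F_j · V_j` with `deg F_j ≤ d_j = min (m(q-1)) (d - |j|q)`. -/
theorem stmt0 (q m d : ℕ) (hq : IsPrimePow q) (hm : 1 ≤ m)
    (K : Type) [Field K] [Fintype K] (hK : Fintype.card K = q)
    (F : MvPolynomial (Fin m) K) (hF : F.totalDegree ≤ d) :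
    ∃ Fj : (Fin m →₀ ℕ) → MvPolynomial (Fin m) K,
      (∀ j : Fin m →₀ ℕ, (∑ l, j l) ≤ d / q →
        (Fj j).totalDegree ≤ min (m * (q - 1)) (d - (∑ l, j l) * q)) ∧
      F = ∑ j ∈ multiIdx m (d / q), Fj j * Vj q j := by
  have hq2 : 2 ≤ q := hq.two_le
  change Decomposable q d F
  rw [F.as_sum]
  refine Finset.sum_induction _ (Decomposable q d) (fun _ _ => Decomposable.add)
    (Decomposable.zero q d) fun a ha => ?_
  have hdeg : ∑ l, a l ≤ d := by
    rw [← Finsupp.sum_fintype a (fun _ e => e) (fun _ => rfl)]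
    exact (le_totalDegree ha).trans hF
  simpa [Vj] using decomposable_monomial_mul_Vj hq2 (coeff a F) _ a 0 rfl (by simpa using hdeg)
end

section
/- Let q be a prime power with an enumeration F_q = {α_0, α_1, ..., α_{q−1}}, let m ≥ 1 and d ≤ m(q−1), and let I_d = {(α_{i_1},...,α_{i_m}) : 0 ≤ i_l ≤ q−1 for 1 ≤ l ≤ m, and i_1 + ... + i_m ≤ d} ⊂ F_q^m. Then I_d is an information set of the Reed-Muller code RM_d: the map sending a codeword c = (F(P))_{P ∈ F_q^m} (for F ∈ F_q[X_1,...,X_m] of total degree at most d) to its restriction (c_P)_{P ∈ I_d} is a bijection from RM_d onto F_q^{I_d}. Equivalently, for every function g : I_d → F_q there exists F of total degree at most d with F(P) = g(P) for all P ∈ I_d, and any two such polynomials take equal values at every point of F_q^m. -/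
open MvPolynomial

/-!
The proof replaces monomials by the multivariate Newton basis attached to the enumeration
`α_0, …, α_{q-1}` of `K`: for an exponent vector `a`, let
`N_a = ∏_l ∏_{j < a_l} (X_l - α_j)`, a polynomial of total degree at most `∑ a_l`.

* From `X_l * N_a = N_{a + e_l} + α_{a_l} * N_a` it follows that every polynomial of degree at most
  `d` defines the same function as a combination of the `N_a` with `∑ a_l ≤ d`. When some
  `a_l ≥ q`, the function `N_a` vanishes identically, so only the `a` indexing the points of `I_d`
  are needed (`exists_newton_comb`).
* `N_a` vanishes at `(α_{b_1}, …, α_{b_m})` unless `a ≤ b` coordinatewise, and does not vanish for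
  `a = b`. Hence the square matrix of values of the `N_a` on `I_d` is triangular with nonzero
  diagonal, and taking coefficients to values on `I_d` is injective (`newton_comb_injective`),
  thus bijective by finiteness.

Coefficients surject onto codewords, and the composite with restriction to `I_d` is bijective, so
restriction is bijective.
-/

namespace ReedMullerInfoSet

variable {q m : ℕ} {K : Type} [Field K]

/-- The enumeration `e` of `K` as a sequence on `ℕ`, with the junk value `0` from index `q` on. -/
def node (e : Fin q ≃ K) (j : ℕ) : K := if h : j < q then e ⟨j, h⟩ else 0

/-- The Newton polynomial `N_a = ∏_l ∏_{j < a_l} (X_l - α_j)`. -/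
noncomputable def newton (e : Fin q ≃ K) (a : Fin m → ℕ) : MvPolynomial (Fin m) K :=
  ∏ l, ∏ j ∈ Finset.range (a l), (X l - C (node e j))

/-- The indices `(i_1, …, i_m)` of the point `P = (α_{i_1}, …, α_{i_m})`. -/
def idx (e : Fin q ≃ K) (P : Fin m → K) (l : Fin m) : ℕ := (e.symm (P l) : ℕ)

lemma node_idx (e : Fin q ≃ K) (P : Fin m → K) (l : Fin m) : node e (idx e P l) = P l := by
  simp [node, idx]

lemma idx_lt (e : Fin q ≃ K) (P : Fin m → K) (l : Fin m) : idx e P l < q :=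
  (e.symm (P l)).2

lemma eval_newton (e : Fin q ≃ K) (a : Fin m → ℕ) (P : Fin m → K) :
    eval P (newton e a) = ∏ l, ∏ j ∈ Finset.range (a l), (P l - node e j) := by
  simp [newton, map_prod]

lemma totalDegree_newton_le (e : Fin q ≃ K) (a : Fin m → ℕ) :
    (newton e a).totalDegree ≤ ∑ l, a l := by
  refine (totalDegree_finsetProd _ _).trans (Finset.sum_le_sum fun l _ => ?_)
  refine (totalDegree_finsetProd _ _).trans ?_
  calc ∑ j ∈ Finset.range (a l), (X l - C (node e j) : MvPolynomial (Fin m) K).totalDegree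
      ≤ ∑ j ∈ Finset.range (a l), 1 := by
        refine Finset.sum_le_sum fun j _ => ?_
        exact (totalDegree_sub_C_le _ _).trans (by simp)
    _ = a l := by simp

lemma eval_newton_eq_zero (e : Fin q ≃ K) {a : Fin m → ℕ} {P : Fin m → K} {l : Fin m}
    (h : idx e P l < a l) : eval P (newton e a) = 0 := by
  rw [eval_newton]
  refine Finset.prod_eq_zero (Finset.mem_univ l) ?_
  exact Finset.prod_eq_zero (Finset.mem_range.2 h) (by rw [node_idx, sub_self])

lemma eval_newton_self_ne_zero (e : Fin q ≃ K) (P : Fin m → K) :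
    eval P (newton e (idx e P)) ≠ 0 := by
  rw [eval_newton]
  refine Finset.prod_ne_zero_iff.2 fun l _ => Finset.prod_ne_zero_iff.2 fun j hj h => ?_
  have hj : j < idx e P l := Finset.mem_range.1 hj
  have hjq : j < q := hj.trans (idx_lt e P l)
  rw [sub_eq_zero, node, dif_pos hjq] at h
  simp [idx, h] at hj

lemma X_mul_newton (e : Fin q ≃ K) (a : Fin m → ℕ) (l : Fin m) :
    X l * newton e a = newton e (a + Pi.single l 1) + C (node e (a l)) * newton e a := by
  have h : newton e (a + Pi.single l 1) = (X l - C (node e (a l))) * newton e a := by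
    unfold newton
    rw [← Finset.mul_prod_erase _ _ (Finset.mem_univ l),
      ← Finset.mul_prod_erase Finset.univ (fun l => ∏ j ∈ Finset.range (a l), _)
        (Finset.mem_univ l), ← mul_assoc]
    congr 1
    · simp [Finset.prod_range_succ, mul_comm]
    · refine Finset.prod_congr rfl fun k hk => ?_
      simp [Pi.single_eq_of_ne (Finset.ne_of_mem_erase hk)]
  rw [h]; ring

/-- The span of the Newton polynomials `N_a` with `∑ a_l ≤ n`; the exponents are not bounded
by `q - 1`. -/
noncomputable def newtonSpan (e : Fin q ≃ K) (m n : ℕ) : Submodule K (MvPolynomial (Fin m) K) :=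
  Submodule.span K {F | ∃ a : Fin m → ℕ, ∑ l, a l ≤ n ∧ F = newton e a}

lemma newtonSpan_mono (e : Fin q ≃ K) {n n' : ℕ} (h : n ≤ n') :
    newtonSpan e m n ≤ newtonSpan e m n' :=
  Submodule.span_mono fun _ ⟨a, ha, hF⟩ => ⟨a, ha.trans h, hF⟩

lemma X_mul_mem_newtonSpan (e : Fin q ≃ K) {n : ℕ} (l : Fin m) {F : MvPolynomial (Fin m) K}
    (hF : F ∈ newtonSpan e m n) : X l * F ∈ newtonSpan e m (n + 1) := by
  induction hF using Submodule.span_induction with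
  | mem F h =>
    obtain ⟨a, ha, rfl⟩ := h
    rw [X_mul_newton, ← smul_eq_C_mul]
    refine add_mem (Submodule.subset_span ⟨_, ?_, rfl⟩)
      (Submodule.smul_mem _ _ (Submodule.subset_span ⟨a, by omega, rfl⟩))
    simpa [Finset.sum_add_distrib] using ha
  | zero => simp
  | add F G _ _ hF hG => rw [mul_add]; exact add_mem hF hG
  | smul c F _ hF => rw [mul_smul_comm]; exact Submodule.smul_mem _ _ hF

lemma monomial_mul_mem_newtonSpan (e : Fin q ≃ K) (s : Fin m →₀ ℕ) :
    ∀ (n : ℕ) (F : MvPolynomial (Fin m) K), F ∈ newtonSpan e m n →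
      monomial s 1 * F ∈ newtonSpan e m (n + s.degree) := by
  induction s using Finsupp.induction_linear with
  | zero => intro n F hF; simpa using hF
  | add s t hs ht =>
    intro n F hF
    have := hs _ _ (ht n F hF)
    rw [← mul_assoc, monomial_mul, one_mul, add_assoc, add_comm t.degree] at this
    rwa [map_add]
  | single l k =>
    intro n F hF
    rw [Finsupp.degree_single, ← X_pow_eq_monomial]
    induction k with
    | zero => simpa using hF
    | succ k ih =>
      rw [pow_succ', mul_assoc]
      exact X_mul_mem_newtonSpan e l ih

lemma mem_newtonSpan (e : Fin q ≃ K) {d : ℕ} {F : MvPolynomial (Fin m) K}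
    (hF : F.totalDegree ≤ d) : F ∈ newtonSpan e m d := by
  rw [F.as_sum]
  refine sum_mem fun s hs => ?_
  have h1 : (1 : MvPolynomial (Fin m) K) ∈ newtonSpan e m 0 :=
    Submodule.subset_span ⟨0, by simp, by simp [newton]⟩
  have h2 := monomial_mul_mem_newtonSpan e s 0 1 h1
  have h3 : s.degree ≤ d := (le_totalDegree hs).trans hF
  have h4 := Submodule.smul_mem _ (coeff s F) (newtonSpan_mono e (n' := d) (by omega) h2)
  simpa [smul_monomial] using h4

/-- As functions on `K^m`, polynomials of degree at most `d` are combinations of the Newton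
polynomials indexed by the points of `I_d`. -/
lemma exists_newton_comb (e : Fin q ≃ K) {d : ℕ}
    [Fintype {P : Fin m → K // ∑ l, idx e P l ≤ d}] {F : MvPolynomial (Fin m) K}
    (hF : F.totalDegree ≤ d) :
    ∃ c : {P : Fin m → K // ∑ l, idx e P l ≤ d} → K,
      ∀ P, eval P F = ∑ Q, c Q * eval P (newton e (idx e Q.1)) := by
  classical
  replace hF := mem_newtonSpan e hF
  induction hF using Submodule.span_induction with
  | mem F h =>
    obtain ⟨a, ha, rfl⟩ := h
    by_cases haq : ∀ l, a l < q
    · have hidx : idx e (fun l => e ⟨a l, haq l⟩) = a := by ext l; simp [idx]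
      refine ⟨Pi.single ⟨fun l => e ⟨a l, haq l⟩, by rwa [hidx]⟩ 1, fun P => ?_⟩
      simp [Pi.single_apply, hidx]
    · push Not at haq
      obtain ⟨l, hl⟩ := haq
      refine ⟨0, fun P => ?_⟩
      rw [eval_newton_eq_zero e ((idx_lt e P l).trans_le hl)]
      simp
  | zero => exact ⟨0, by simp⟩
  | add F G _ _ hF hG =>
    obtain ⟨c, hc⟩ := hF
    obtain ⟨c', hc'⟩ := hG
    exact ⟨c + c', fun P => by simp [hc, hc', add_mul, Finset.sum_add_distrib]⟩
  | smul r F _ hF =>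
    obtain ⟨c, hc⟩ := hF
    exact ⟨r • c, fun P => by simp [hc, Finset.mul_sum, mul_assoc]⟩

/-- Triangularity: a combination of the Newton polynomials indexed by `I_d` that vanishes on `I_d`
has zero coefficients. -/
lemma coeff_eq_zero (e : Fin q ≃ K) {d : ℕ}
    [Fintype {P : Fin m → K // ∑ l, idx e P l ≤ d}]
    (c : {P : Fin m → K // ∑ l, idx e P l ≤ d} → K)
    (h : ∀ P : {P : Fin m → K // ∑ l, idx e P l ≤ d},
      ∑ Q, c Q * eval P.1 (newton e (idx e Q.1)) = 0) : c = 0 := by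
  suffices H : ∀ n, ∀ P : {P : Fin m → K // ∑ l, idx e P l ≤ d}, ∑ l, idx e P.1 l = n → c P = 0 from
    funext fun P => H _ P rfl
  intro n
  induction n using Nat.strong_induction_on with
  | _ n ih =>
    intro P hP
    have h0 := h P
    rw [Finset.sum_eq_single P] at h0
    · exact (mul_eq_zero.1 h0).resolve_right (eval_newton_self_ne_zero e P.1)
    · intro Q _ hQP
      by_cases hle : ∀ l, idx e Q.1 l ≤ idx e P.1 l
      · -- `Q ≠ P` lies coordinatewise below `P`, so its index sum is strictly smaller.
        have hne : ∃ l, idx e Q.1 l < idx e P.1 l := by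
          by_contra! hge
          refine hQP (Subtype.ext (funext fun l => ?_))
          rw [← node_idx e Q.1 l, ← node_idx e P.1 l, le_antisymm (hle l) (hge l)]
        obtain ⟨l, hl⟩ := hne
        have hlt : ∑ l, idx e Q.1 l < n :=
          hP ▸ Finset.sum_lt_sum (fun l _ => hle l) ⟨l, Finset.mem_univ l, hl⟩
        rw [ih _ hlt Q rfl, zero_mul]
      · push Not at hle
        obtain ⟨l, hl⟩ := hle
        rw [eval_newton_eq_zero e hl, mul_zero]
    · simp

lemma newton_comb_injective (e : Fin q ≃ K) {d : ℕ}
    [Fintype {P : Fin m → K // ∑ l, idx e P l ≤ d}] :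
    Function.Injective (fun (c : {P : Fin m → K // ∑ l, idx e P l ≤ d} → K)
      (P : {P : Fin m → K // ∑ l, idx e P l ≤ d}) =>
        ∑ Q, c Q * eval P.1 (newton e (idx e Q.1))) := by
  intro c c' h
  refine sub_eq_zero.1 (coeff_eq_zero e (c - c') fun P => ?_)
  have := congrFun h P
  simpa [sub_mul, sub_eq_zero] using this

end ReedMullerInfoSet

open ReedMullerInfoSet in
/-- Key et al.'s information set for the Reed–Muller code `RM_d` over `F_q`:
with `F_q` enumerated by `e : Fin q ≃ K`, the set
`I_d = {(α_{i_1},…,α_{i_m}) : i_1 + ⋯ + i_m ≤ d}` is an information set, i.e.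
restriction of codewords of `RM_d` to the coordinates in `I_d` is a bijection
onto `F_q^{I_d}`. -/
theorem stmt4 (q m d : ℕ) (hq : IsPrimePow q) (hm : 1 ≤ m) (hd : d ≤ m * (q - 1))
    (K : Type) [Field K] [Fintype K] (hK : Fintype.card K = q) (e : Fin q ≃ K) :
    Function.Bijective
      (fun c : {c : (Fin m → K) → K // ∃ F : MvPolynomial (Fin m) K,
            F.totalDegree ≤ d ∧ ∀ P : Fin m → K, c P = MvPolynomial.eval P F} =>
        fun P : {P : Fin m → K // ∑ l, ((e.symm (P l) : Fin q) : ℕ) ≤ d} =>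
          (c : (Fin m → K) → K) (P : Fin m → K)) := by
  classical
  let : Fintype {P : Fin m → K // ∑ l, idx e P l ≤ d} := Fintype.ofFinite _
  have hinj := newton_comb_injective (m := m) e (d := d)
  constructor
  · rintro ⟨f, F, hF, hf⟩ ⟨g, G, hG, hg⟩ hfg
    obtain ⟨c, hc⟩ := exists_newton_comb e hF
    obtain ⟨c', hc'⟩ := exists_newton_comb e hG
    have hcc : c = c' := hinj (funext fun P => by
      have := congrFun hfg P
      simp only [hf, hg] at this
      rw [hc, hc'] at this
      exact this)
    refine Subtype.ext (funext fun P => ?_)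
    change f P = g P
    rw [hf, hg, hc, hc', hcc]
  · intro g
    obtain ⟨c, hc⟩ := Finite.surjective_of_injective hinj g
    refine ⟨⟨fun P => eval P (∑ Q, C (c Q) * newton e (idx e Q.1)), _, ?_, fun _ => rfl⟩, ?_⟩
    · refine totalDegree_finsetSum_le fun Q _ => ?_
      rw [← smul_eq_C_mul]
      exact (totalDegree_smul_le _ _).trans ((totalDegree_newton_le e _).trans Q.2)
    · rw [← hc]
      funext P
      simp
end

section
/- Let q be a prime power with an enumeration F_q = {α_0,...,α_{q−1}}, let m ≥ 1, s ≥ 1, and d < sq. For each multi-index j ∈ ℕ^m with |j| < s set d_j := min(m(q−1), d − |j|·q) and let I_{d_j} = {(α_{i_1},...,α_{i_m}) : 0 ≤ i_l ≤ q−1, i_1+...+i_m ≤ d_j} (the empty set if d_j < 0). Then the F_q-linear map sending a polynomial F ∈ F_q[X_1,...,X_m] of total degree at most d to the tuple (H(F,j)(P)) indexed by pairs (j,P) with |j| < s and P ∈ I_{d_j}, where H(F,j) denotes the j-th Hasse derivative of F, is a bijection onto F_q^I where I = {(j,P) : |j| < s, P ∈ I_{d_j}}. In particular, I is an information set of the multiplicity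 code MRM^s_d. -/
/-!
Repeat the enumeration of `F_q` periodically, `α_k := α_{k mod q}` for `k ∈ ℕ`, and consider the
multivariate Newton polynomials `N_a = ∏_l ∏_{k < a_l} (X_l - α_k)` with `a ∈ ℕ^m`; the total degree
of `N_a` is at most `|a|`. A pair `(j, P)` with `P = (α_{i_1}, …, α_{i_m})` is encoded by the exponent
`a = q j + i`; Euclidean division by `q` makes this a bijection between the index set `I` of the
theorem and `{a : |a| ≤ d}` (`indexEquiv`), so the source and target of the map have the same
dimension.

The value `H(N_b, j)(P)` is the coefficient of `Z^j` in `N_b(P + Z)`, hence a product over `l` of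
univariate coefficients. In the variable `Z_l` the polynomial `N_b(P + Z)` vanishes at `0` to order
exactly `#{k < b_l : k ≡ i_l mod q}`; this exceeds `j_l` when `b_l > q j_l + i_l` and equals `j_l`
when `b_l = q j_l + i_l` (`coeff_newton_eq_zero`, `coeff_newton_ne_zero`). So the matrix
`H(N_b, j)(P)`, with rows and columns indexed by exponents, is triangular for the product order on
`ℕ^m` with nonzero diagonal. Its rows are thus linearly independent, the map is surjective, and by
equality of dimensions it is bijective.
-/

open MvPolynomial

/-- The `i`-th Hasse derivative of `F`: the coefficient of `Z^i` in `F(X+Z)`. -/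
noncomputable def hasseDerivM {K : Type} [CommRing K] {m : ℕ} (i : Fin m →₀ ℕ)
    (F : MvPolynomial (Fin m) K) : MvPolynomial (Fin m) K :=
  MvPolynomial.coeff i
    ((MvPolynomial.aeval
        (fun l => (MvPolynomial.C (MvPolynomial.X l) + MvPolynomial.X l :
          MvPolynomial (Fin m) (MvPolynomial (Fin m) K)))) F)

/-- Evaluating the `j`-th Hasse derivative at `P` extracts the coefficient of `Z^j` in `F(P + Z)`. -/
lemma eval_hasseDerivM {K : Type} [CommRing K] {m : ℕ} (j : Fin m →₀ ℕ) (P : Fin m → K)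
    (F : MvPolynomial (Fin m) K) :
    eval P (hasseDerivM j F) =
      coeff j (aeval (fun l => (C (P l) + X l : MvPolynomial (Fin m) K)) F) := by
  unfold hasseDerivM
  rw [← coeff_map, map_aeval]
  congr 1
  rw [aeval_def, coe_eval₂Hom]
  congr 1
  · refine RingHom.ext fun x => ?_
    rw [RingHom.comp_apply, MvPolynomial.algebraMap_apply, MvPolynomial.algebraMap_eq, map_C,
      eval_C]
  · ext l
    simp

/-- The coefficients of a product of polynomials in separate variables are the products of the
univariate coefficients. -/
lemma coeff_prod_aeval_X {K : Type} [CommRing K] {m : ℕ} (p : Fin m → Polynomial K)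
    (j : Fin m →₀ ℕ) :
    coeff j (∏ l, Polynomial.aeval (X l : MvPolynomial (Fin m) K) (p l)) =
      ∏ l, (p l).coeff (j l) := by
  classical
  -- The bound `N` covers the whole of every `p l` and also the exponent `j l`.
  let N : Fin m → ℕ := fun l => max ((p l).natDegree + 1) (j l + 1)
  have h1 : ∀ l, Polynomial.aeval (X l : MvPolynomial (Fin m) K) (p l) =
      ∑ k ∈ Finset.range (N l), C ((p l).coeff k) * X l ^ k := by
    intro l
    rw [Polynomial.aeval_eq_sum_range' (n := N l) (by simp [N])]
    simp [smul_eq_C_mul]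
  have h2 : ∀ f : Fin m → ℕ,
      (∏ l, (C ((p l).coeff (f l)) * X l ^ f l : MvPolynomial (Fin m) K)) =
        monomial (Finsupp.equivFunOnFinite.symm f) (∏ l, (p l).coeff (f l)) := by
    intro f
    rw [Finset.prod_mul_distrib, ← map_prod, monomial_eq, Finsupp.prod_fintype _ _ (by simp)]
    simp
  simp_rw [h1]
  rw [Finset.prod_univ_sum]
  simp_rw [h2]
  rw [coeff_sum, Finset.sum_eq_single (j : Fin m → ℕ)]
  · simp [coeff_monomial]
  · intro f _ hf
    rw [coeff_monomial, if_neg]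
    rintro rfl
    exact hf (by simp)
  · intro h
    exact absurd (Fintype.mem_piFinset.2 fun l => by simp [N]) h

/-- The Newton polynomial `N_n = ∏_{k < n} (X - α_k)` recentred at `x`, that is `N_n(x + Z)` as a
polynomial in `Z`. -/
noncomputable def newtonAt {K : Type} [Field K] (α : ℕ → K) (x : K) (n : ℕ) : Polynomial K :=
  ∏ k ∈ Finset.range n, (Polynomial.X + Polynomial.C (x - α k))

/-- The multivariate Newton polynomial `N_a = ∏_l ∏_{k < a_l} (X_l - α_k)`. -/
noncomputable def newtonM {K : Type} [Field K] (α : ℕ → K) {m : ℕ} (a : Fin m → ℕ) :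
    MvPolynomial (Fin m) K :=
  ∏ l, ∏ k ∈ Finset.range (a l), (X l - C (α k))

lemma totalDegree_newtonM_le {K : Type} [Field K] (α : ℕ → K) {m : ℕ} (a : Fin m → ℕ) :
    (newtonM α a).totalDegree ≤ ∑ l, a l := by
  refine (totalDegree_finsetProd _ _).trans (Finset.sum_le_sum fun l _ => ?_)
  refine (totalDegree_finsetProd _ _).trans ?_
  refine (Finset.sum_le_card_nsmul _ _ 1 fun k _ => ?_).trans (by simp)
  exact (totalDegree_sub_C_le _ _).trans (totalDegree_X _).le

lemma eval_hasseDerivM_newtonM {K : Type} [Field K] (α : ℕ → K) {m : ℕ} (a : Fin m → ℕ)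
    (j : Fin m →₀ ℕ) (P : Fin m → K) :
    eval P (hasseDerivM j (newtonM α a)) = ∏ l, (newtonAt α (P l) (a l)).coeff (j l) := by
  rw [eval_hasseDerivM, ← coeff_prod_aeval_X]
  congr 1
  simp only [newtonM, newtonAt, map_prod]
  refine Finset.prod_congr rfl fun l _ => Finset.prod_congr rfl fun k _ => ?_
  simp [MvPolynomial.algebraMap_eq]
  ring

/-- The order of vanishing of `N_n(α_i + Z)` at `Z = 0` is the number of `k < n` congruent
to `i` modulo `q`. -/
lemma newtonAt_eq {K : Type} [Field K] {q : ℕ} {α : ℕ → K}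
    (hα : ∀ k k', α k = α k' ↔ k ≡ k' [MOD q]) (i n : ℕ) :
    ∃ R : Polynomial K, R.coeff 0 ≠ 0 ∧
      newtonAt α (α i) n = Polynomial.X ^ (n.count (· ≡ i [MOD q])) * R := by
  classical
  refine ⟨∏ k ∈ (Finset.range n).filter (fun k => ¬ k ≡ i [MOD q]),
    (Polynomial.X + Polynomial.C (α i - α k)), ?_, ?_⟩
  · rw [Polynomial.coeff_zero_prod, Finset.prod_ne_zero_iff]
    intro k hk
    have h := (Finset.mem_filter.1 hk).2
    rw [← hα] at h
    simpa [sub_eq_zero] using fun h' => h (Eq.symm h')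
  · rw [newtonAt, ← Finset.prod_filter_mul_prod_filter_not _ (fun k => k ≡ i [MOD q])]
    congr 1
    rw [Nat.count_eq_card_filter_range]
    refine Finset.prod_eq_pow_card fun k hk => ?_
    rw [(hα k i).2 (Finset.mem_filter.1 hk).2]
    simp

lemma coeff_newton_eq_zero {K : Type} [Field K] {q : ℕ} {α : ℕ → K}
    (hα : ∀ k k', α k = α k' ↔ k ≡ k' [MOD q]) {i j n : ℕ} (hi : i < q) (hn : q * j + i < n) :
    (newtonAt α (α i) n).coeff j = 0 := by
  obtain ⟨R, -, hR⟩ := newtonAt_eq hα i n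
  have hc : j < n.count (· ≡ i [MOD q]) := by
    -- The index `q * j + i` is itself counted, on top of the `j` smaller ones.
    have h1 := Nat.count_monotone (· ≡ i [MOD q]) (Nat.succ_le_of_lt hn)
    rw [Nat.succ_eq_add_one, Nat.count_succ, Nat.count_modEq_card _ (by omega)] at h1
    have h2 : (q * j + i) / q = j := by
      rw [Nat.mul_add_div (by omega), Nat.div_eq_of_lt hi, add_zero]
    rw [if_pos (show q * j + i ≡ i [MOD q] by simp [Nat.ModEq])] at h1
    omega
  rw [hR, Polynomial.coeff_X_pow_mul', if_neg (by omega)]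

lemma coeff_newton_ne_zero {K : Type} [Field K] {q : ℕ} {α : ℕ → K}
    (hα : ∀ k k', α k = α k' ↔ k ≡ k' [MOD q]) {i j : ℕ} (hi : i < q) :
    (newtonAt α (α i) (q * j + i)).coeff j ≠ 0 := by
  obtain ⟨R, hR0, hR⟩ := newtonAt_eq hα i (q * j + i)
  have hc : (q * j + i).count (· ≡ i [MOD q]) = j := by
    rw [Nat.count_modEq_card _ (by omega), Nat.mul_add_div (by omega), Nat.div_eq_of_lt hi]
    simp
  rw [hR, hc, Polynomial.coeff_X_pow_mul', if_pos le_rfl, Nat.sub_self]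
  exact hR0

/-- The index set of the theorem: the pairs `(j, P)` with `|j| < s` and `P ∈ I_{d_j}`. -/
abbrev InfoSet (q m s d : ℕ) (K : Type) (e : Fin q ≃ K) : Type :=
  {x : (Fin m →₀ ℕ) × (Fin m → K) //
    (∑ l, x.1 l) < s ∧ (∑ l, x.1 l) * q ≤ d ∧
    (∑ l, ((e.symm (x.2 l) : Fin q) : ℕ)) ≤ min (m * (q - 1)) (d - (∑ l, x.1 l) * q)}

/-- The exponent `q j + i` attached to `(j, (α_{i_1}, …, α_{i_m}))`. -/
def expo {q m : ℕ} {K : Type} (e : Fin q ≃ K) (x : (Fin m →₀ ℕ) × (Fin m → K)) (l : Fin m) : ℕ :=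
  q * x.1 l + (e.symm (x.2 l) : ℕ)

lemma sum_expo {q m : ℕ} {K : Type} (e : Fin q ≃ K) (x : (Fin m →₀ ℕ) × (Fin m → K)) :
    ∑ l, expo e x l = (∑ l, x.1 l) * q + ∑ l, (e.symm (x.2 l) : ℕ) := by
  simp only [expo]
  rw [Finset.sum_add_distrib, ← Finset.mul_sum, mul_comm]

/-- Given `d < s q`, membership in the index set only says that the exponent has degree at most `d`:
the bounds `|j| < s` and `|i| ≤ m (q - 1)` are automatic. -/
lemma mem_infoSet_iff {q m s d : ℕ} (hd : d < s * q) {K : Type} (e : Fin q ≃ K)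
    (x : (Fin m →₀ ℕ) × (Fin m → K)) :
    ((∑ l, x.1 l) < s ∧ (∑ l, x.1 l) * q ≤ d ∧
      (∑ l, ((e.symm (x.2 l) : Fin q) : ℕ)) ≤ min (m * (q - 1)) (d - (∑ l, x.1 l) * q)) ↔
    ∑ l, expo e x l ≤ d := by
  rw [sum_expo, le_min_iff]
  constructor
  · omega
  · intro h
    refine ⟨?_, by omega, ?_, by omega⟩
    · exact lt_of_mul_lt_mul_right (a := q) (by omega) (Nat.zero_le _)
    · refine (Finset.sum_le_card_nsmul _ _ (q - 1) fun l _ => ?_).trans (by simp)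
      have := (e.symm (x.2 l)).isLt
      omega

/-- Euclidean division by `q` identifies the index set with the exponents of degree at most `d`. -/
noncomputable def indexEquiv {q m s d : ℕ} (hq : 0 < q) (hd : d < s * q) {K : Type}
    (e : Fin q ≃ K) :
    InfoSet q m s d K e ≃ {n : Fin m →₀ ℕ | (n.sum fun _ k => k) ≤ d} where
  toFun x := ⟨Finsupp.equivFunOnFinite.symm (expo e x.1), by
    have := (mem_infoSet_iff hd e x.1).1 x.2
    rw [Set.mem_ofPred_eq, Finsupp.sum_fintype _ _ (by simp)]
    simpa using this⟩
  invFun a := ⟨(Finsupp.equivFunOnFinite.symm fun l => a.1 l / q,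
      fun l => e ⟨a.1 l % q, Nat.mod_lt _ hq⟩), by
    have := a.2
    rw [Set.mem_ofPred_eq, Finsupp.sum_fintype _ _ (by simp)] at this
    rw [mem_infoSet_iff hd]
    simpa [expo, Nat.div_add_mod] using this⟩
  left_inv x := by
    ext l
    · simp [expo, Nat.mul_add_div hq, Nat.div_eq_of_lt (e.symm (x.1.2 l)).isLt]
    · simp [expo, Nat.mod_eq_of_lt (e.symm (x.1.2 l)).isLt]
  right_inv a := by
    ext l
    simp [expo, Nat.div_add_mod]

/-- A finite family of vectors whose matrix is triangular, with nonzero diagonal, for the pullback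
of the product order along `a`, is linearly independent. -/
lemma linearIndependent_of_triangular {K ι : Type} [Field K] [Fintype ι] {m : ℕ}
    (a : ι → Fin m → ℕ) (ha : Function.Injective a) (v : ι → ι → K)
    (hv : ∀ x y, v x y ≠ 0 → a x ≤ a y) (hd : ∀ x, v x x ≠ 0) :
    LinearIndependent K v := by
  classical
  rw [Fintype.linearIndependent_iff]
  intro g hg
  suffices ∀ n : Fin m → ℕ, ∀ y, a y = n → g y = 0 from fun y => this _ y rfl
  intro n
  induction n using WellFoundedLT.induction with
  | ind n ih =>
    rintro y rfl
    have h := congrFun hg y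
    rw [Finset.sum_apply, Finset.sum_eq_single y] at h
    · simpa [hd y] using h
    · intro x _ hxy
      by_cases h0 : v x y = 0
      · simp [h0]
      · have hlt : a x < a y := lt_of_le_of_ne (hv x y h0) fun h' => hxy (ha h')
        simp [ih _ hlt x rfl]
    · simp

/-- The information set of the multiplicity code `MRM^s_d`:
with `F_q` enumerated by `e : Fin q ≃ K` and, for each multi-index `j` with `|j| < s`,
`d_j := min (m(q-1)) (d - |j|q)` and `I_{d_j}` the information set of `RM_{d_j}`
(empty when `d_j < 0`, i.e. when `|j|·q > d`), the map sending a polynomial `F`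
of total degree at most `d` to the tuple `(H(F,j)(P))_{(j,P), |j| < s, P ∈ I_{d_j}}`
is a bijection onto `F_q^I`. -/
theorem stmt5 (q m s d : ℕ) (hq : IsPrimePow q) (hm : 1 ≤ m) (hs : 1 ≤ s)
    (hd : d < s * q)
    (K : Type) [Field K] [Fintype K] (hK : Fintype.card K = q) (e : Fin q ≃ K) :
    Function.Bijective
      (fun F : restrictTotalDegree (Fin m) K d =>
        fun jP : {x : (Fin m →₀ ℕ) × (Fin m → K) //
            (∑ l, x.1 l) < s ∧ (∑ l, x.1 l) * q ≤ d ∧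
            (∑ l, ((e.symm (x.2 l) : Fin q) : ℕ)) ≤
              min (m * (q - 1)) (d - (∑ l, x.1 l) * q)} =>
          MvPolynomial.eval (jP : (Fin m →₀ ℕ) × (Fin m → K)).2
            (hasseDerivM (jP : (Fin m →₀ ℕ) × (Fin m → K)).1
              (F : MvPolynomial (Fin m) K))) := by
  classical
  have hq0 : 0 < q := hq.pos
  let B : Module.Basis {n : Fin m →₀ ℕ | (n.sum fun _ k => k) ≤ d} K
    (restrictTotalDegree (Fin m) K d) := basisRestrictSupport K _
  have : Finite {n : Fin m →₀ ℕ | (n.sum fun _ k => k) ≤ d} := Module.Finite.finite_basis B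
  let E := indexEquiv (m := m) hq0 hd e
  have : Finite (InfoSet q m s d K e) := Finite.of_equiv _ E.symm
  have : Fintype (InfoSet q m s d K e) := Fintype.ofFinite _
  let f : restrictTotalDegree (Fin m) K d →ₗ[K] (InfoSet q m s d K e → K) :=
    { toFun := fun F x => eval x.1.2 (hasseDerivM x.1.1 (F : MvPolynomial (Fin m) K))
      map_add' := fun F G => by
        ext x
        simp [eval_hasseDerivM]
      map_smul' := fun c F => by
        ext x
        simp [eval_hasseDerivM] }
  change Function.Bijective f
  have hfin : Module.finrank K (restrictTotalDegree (Fin m) K d) =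
      Module.finrank K (InfoSet q m s d K e → K) := by
    rw [Module.finrank_eq_nat_card_basis B, Module.finrank_fintype_fun_eq_card,
      ← Nat.card_eq_fintype_card, Nat.card_congr E]
  let α : ℕ → K := fun k => e ⟨k % q, Nat.mod_lt _ hq0⟩
  have hα : ∀ k k', α k = α k' ↔ k ≡ k' [MOD q] := by
    intro k k'
    simp [α, Nat.ModEq]
  have hα' : ∀ c : K, α (e.symm c) = c := by
    intro c
    simp [α, Nat.mod_eq_of_lt (e.symm c).isLt]
  let w : InfoSet q m s d K e → restrictTotalDegree (Fin m) K d := fun x =>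
    ⟨newtonM α (expo e x.1), (mem_restrictTotalDegree _ _ _).2
      ((totalDegree_newtonM_le α _).trans ((mem_infoSet_iff hd e x.1).1 x.2))⟩
  have hfw : ∀ x y, f (w x) y = ∏ l, (newtonAt α (y.1.2 l) (expo e x.1 l)).coeff (y.1.1 l) :=
    fun x y => eval_hasseDerivM_newtonM α _ _ _
  have hli : LinearIndependent K (fun x => f (w x)) := by
    refine linearIndependent_of_triangular (fun x => expo e x.1) ?_ _ ?_ ?_
    · intro x y hxy
      exact E.injective (Subtype.ext (congrArg Finsupp.equivFunOnFinite.symm hxy))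
    · intro x y hxy l
      by_contra hlt
      rw [hfw] at hxy
      refine hxy (Finset.prod_eq_zero (Finset.mem_univ l) ?_)
      have := coeff_newton_eq_zero hα (e.symm (y.1.2 l)).isLt (not_le.1 hlt)
      rwa [hα'] at this
    · intro x
      rw [hfw, Finset.prod_ne_zero_iff]
      intro l _
      have := coeff_newton_ne_zero hα (j := x.1.1 l) (e.symm (x.1.2 l)).isLt
      rwa [hα'] at this
  have hspan := hli.span_eq_top_of_card_eq_finrank' (by simp)
  have hsurj : Function.Surjective f := by
    rw [← LinearMap.range_eq_top, eq_top_iff, ← hspan, Submodule.span_le]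
    rintro _ ⟨x, rfl⟩
    exact ⟨w x, rfl⟩
  exact ⟨(LinearMap.injective_iff_surjective_of_finrank_eq_finrank hfin).2 hsurj, hsurj⟩
end

section
/- Let q be a prime power, m ≥ 1, s ≥ 1, and d < sq. The multiplicity code MRM^s_d, i.e., the image of the F_q-linear map F ↦ ((H(F,i)(P))_{i ∈ ℕ^m, |i| < s})_{P ∈ F_q^m} on the space of polynomials F ∈ F_q[X_1,...,X_m] of total degree at most d, has dimension C(m+d, m) over F_q. -/
/-!
The space of polynomials of total degree at most `d` has dimension `C(m+d, m)` (stars and bars), so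
the point is that the evaluation map is injective on it: a polynomial `F` of degree less than `s q`
that vanishes with multiplicity at least `s` at every point of `F_q^m` is zero
(`eq_zero_of_vanishesToOrder`).

This is proved by induction on the number of variables and, inside, on `s`. Let `g = Y^q - Y`, taken
in the first variable `Y`. Expanding `F` around a point `P` in the remaining variables only, the
vanishing condition says that the coefficient of `Z^a`, a univariate polynomial in `Y`, is
divisible by `g ^ (s - |a|)` (`vanishesToOrder_succ_iff`). Write `F = g A + ∑_{k < q} Y^k B_k`, where
the `B_k` do not involve `Y` and `deg B_k ≤ deg F` (`exists_divMod`). Reducing modulo `g`, all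
coefficients of order `< s` of the translates of the `B_k` vanish, so `B_k = 0` by induction on the
number of variables. Then `F = g A`, and `A` has degree less than `(s - 1) q` and vanishes with
multiplicity at least `s - 1` everywhere, so `A = 0` by induction on `s`.
-/

open MvPolynomial

/-! ### Translates and multiplicities -/

/-- Translation of a polynomial by the point `P`, i.e. `F(Z) ↦ F(P + Z)`. -/
noncomputable def shiftBy {K : Type} [Field K] {n : ℕ} (P : Fin n → K) :
    MvPolynomial (Fin n) K →ₐ[K] MvPolynomial (Fin n) K :=
  aeval fun l => C (P l) + X l

/-- `F` vanishes with multiplicity at least `s` at every point of `K^n`: all coefficients of order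
less than `s` of all its translates are zero. -/
def VanishesToOrder {K : Type} [Field K] {n : ℕ} (s : ℕ) (F : MvPolynomial (Fin n) K) : Prop :=
  ∀ (P : Fin n → K) (a : Fin n →₀ ℕ), ∑ l, a l < s → coeff a (shiftBy P F) = 0

/-- Hasse derivatives at `P` are the coefficients of the translate by `P`. -/
theorem eval_hasseDerivM_s12 {K : Type} [Field K] {m : ℕ} (i : Fin m →₀ ℕ)
    (F : MvPolynomial (Fin m) K) (P : Fin m → K) :
    eval P (hasseDerivM i F) = coeff i (shiftBy P F) := by
  unfold hasseDerivM
  rw [← coeff_map]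
  congr 1
  have h : ((MvPolynomial.mapAlgHom (aeval P) :
      MvPolynomial (Fin m) (MvPolynomial (Fin m) K) →ₐ[K] MvPolynomial (Fin m) K).comp
      (aeval (fun l => (C (X l) + X l : MvPolynomial (Fin m) (MvPolynomial (Fin m) K)))))
      = shiftBy P := by
    apply MvPolynomial.algHom_ext
    intro l
    simp [shiftBy]
  have := DFunLike.congr_fun h F
  rw [← this]
  simp only [AlgHom.comp_apply, mapAlgHom_apply]
  rfl

/-! ### Separating the first variable -/

/-- The monic univariate polynomial with every element of `K` as a simple root; it equals
`Y^q - Y`. -/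
noncomputable def fieldPoly (K : Type) [Field K] [Fintype K] : Polynomial K :=
  ∏ y : K, (Polynomial.X - Polynomial.C y)

theorem fieldPoly_monic (K : Type) [Field K] [Fintype K] : (fieldPoly K).Monic :=
  Polynomial.monic_prod_of_monic _ _ fun y _ => Polynomial.monic_X_sub_C y

theorem natDegree_fieldPoly (K : Type) [Field K] [Fintype K] :
    (fieldPoly K).natDegree = Fintype.card K := by
  unfold fieldPoly
  rw [Polynomial.natDegree_prod_of_monic _ _ fun y _ => Polynomial.monic_X_sub_C y]
  simp

/-- Reading a polynomial in `Z_0, …, Z_n` as a polynomial in `Z_1, …, Z_n` whose coefficients are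
univariate polynomials in `Y = Z_0`. -/
noncomputable def splitVar (K : Type) [Field K] (n : ℕ) :
    MvPolynomial (Fin (n + 1)) K →ₐ[K] MvPolynomial (Fin n) (Polynomial K) :=
  aeval (Fin.cons (C Polynomial.X) X)

theorem coeff_splitVar {K : Type} [Field K] {n : ℕ} (G : MvPolynomial (Fin (n + 1)) K)
    (a : Fin n →₀ ℕ) (j : ℕ) :
    (coeff a (splitVar K n G)).coeff j = coeff (Finsupp.cons j a) G := by
  induction G using MvPolynomial.induction_on' with
  | monomial u c =>
    have h : splitVar K n (monomial u c)
        = monomial u.tail (Polynomial.monomial (u 0) c) := by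
      rw [splitVar, aeval_monomial, Finsupp.prod_fintype _ _ (by simp), Fin.prod_univ_succ]
      simp only [Fin.cons_zero, Fin.cons_succ]
      rw [monomial_eq (s := u.tail), Finsupp.prod_fintype _ _ (by simp)]
      simp only [Finsupp.tail_apply, ← Polynomial.C_mul_X_pow_eq_monomial, map_mul, map_pow]
      rw [← mul_assoc]
      congr 2
    rw [h, coeff_monomial, coeff_monomial]
    have hu : u = Finsupp.cons j a ↔ u.tail = a ∧ u 0 = j := by
      constructor
      · rintro rfl; simp
      · rintro ⟨rfl, rfl⟩; simp
    by_cases h1 : u.tail = a <;> by_cases h2 : u 0 = j <;>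
      simp [hu, h1, h2, Polynomial.coeff_monomial]
  | add p q hp hq => simp [hp, hq]

/-- Translation by `P` in the last `n` variables only, the first variable being kept as the
variable `Y` of the univariate coefficients. -/
noncomputable def partialShift {K : Type} [Field K] {n : ℕ} (P : Fin n → K) :
    MvPolynomial (Fin (n + 1)) K →ₐ[K] MvPolynomial (Fin n) (Polynomial K) :=
  aeval (Fin.cons (C Polynomial.X) fun l => C (Polynomial.C (P l)) + X l)

/-- Expanding the coefficients of the partial translate at `Y = y` gives the full translate by
`(y, P)`. -/
theorem coeff_taylor_partialShift {K : Type} [Field K] {n : ℕ} (P : Fin n → K) (y : K)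
    (F : MvPolynomial (Fin (n + 1)) K) (a : Fin n →₀ ℕ) (j : ℕ) :
    (Polynomial.taylor y (coeff a (partialShift P F))).coeff j
      = coeff (Finsupp.cons j a) (shiftBy (Fin.cons y P : Fin (n + 1) → K) F) := by
  have h : ((MvPolynomial.mapAlgHom (Polynomial.taylorAlgHom y)).comp (partialShift P))
      = (splitVar K n).comp (shiftBy (Fin.cons y P : Fin (n + 1) → K)) := by
    apply MvPolynomial.algHom_ext
    intro l
    refine Fin.cases ?_ (fun l => ?_) l
    · simp [partialShift, shiftBy, splitVar, add_comm,
        MvPolynomial.algebraMap_apply]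
    · simp [partialShift, shiftBy, splitVar, MvPolynomial.algebraMap_apply]
  have h2 := DFunLike.congr_fun h F
  simp only [AlgHom.comp_apply, mapAlgHom_apply] at h2
  rw [← coeff_splitVar, ← h2, coeff_map]
  rfl

/-- Multiplicity at all points in terms of partial translates: the first variable is handled by
divisibility by powers of `Y^q - Y`, which collects the conditions at all values of `Y` at once. -/
theorem vanishesToOrder_succ_iff {K : Type} [Field K] [Fintype K] {n s : ℕ}
    (F : MvPolynomial (Fin (n + 1)) K) :
    VanishesToOrder s F ↔ ∀ (P : Fin n → K) (a : Fin n →₀ ℕ),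
      fieldPoly K ^ (s - ∑ l, a l) ∣ coeff a (partialShift P F) := by
  have key : ∀ (y : K) (k : ℕ) (f : Polynomial K),
      (Polynomial.X - Polynomial.C y) ^ k ∣ f ↔ ∀ j < k, (Polynomial.taylor y f).coeff j = 0 := by
    intro y k f
    rw [← Polynomial.X_pow_dvd_iff, ← map_dvd_iff (Polynomial.taylorEquiv y)]
    have h : ∀ p, Polynomial.taylorEquiv y p = Polynomial.taylor y p := fun _ => rfl
    simp [h]
  constructor
  · intro h P a
    unfold fieldPoly
    rw [← Finset.prod_pow]
    apply Finset.prod_dvd_of_coprime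
    · intro x _ y _ hxy
      exact (Polynomial.pairwise_coprime_X_sub_C (s := fun x : K => x)
        Function.injective_id hxy).pow
    · intro y _
      rw [key]
      intro j hj
      rw [coeff_taylor_partialShift]
      apply h
      simp [Fin.sum_univ_succ]
      omega
  · intro h P a ha
    rw [← Fin.cons_self_tail P, ← Finsupp.cons_tail a, ← coeff_taylor_partialShift]
    refine (key _ _ _).1 (dvd_trans (pow_dvd_pow_of_dvd ?_ _) (h _ _)) _ ?_
    · exact Finset.dvd_prod_of_mem _ (Finset.mem_univ _)
    · simp only [Fin.sum_univ_succ, Finsupp.tail_apply] at ha ⊢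
      omega

/-! ### Division by `Y^q - Y` and the vanishing theorem -/

/-- Division with remainder by `Y^q - Y` in the first variable, with control of the degree of the
coefficients of the remainder. -/
theorem exists_divMod {K : Type} [Field K] [Fintype K] {n : ℕ}
    (F : MvPolynomial (Fin (n + 1)) K) :
    ∃ (A : MvPolynomial (Fin (n + 1)) K) (B : ℕ → MvPolynomial (Fin n) K),
      (∀ k, (B k).totalDegree ≤ F.totalDegree) ∧
      F = Polynomial.aeval (X 0) (fieldPoly K) * A
        + ∑ k ∈ Finset.range (Fintype.card K), X 0 ^ k * rename Fin.succ (B k) := by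
  -- Both sides are additive in `F`, so it suffices to divide single monomials.
  suffices H : ∀ d, ∀ u : Fin (n + 1) →₀ ℕ, ∀ c : K, (u.sum fun _ e => e) ≤ d →
      ∃ (A : MvPolynomial (Fin (n + 1)) K) (B : ℕ → MvPolynomial (Fin n) K),
      (∀ k, (B k).totalDegree ≤ d) ∧
      monomial u c = Polynomial.aeval (X 0) (fieldPoly K) * A
        + ∑ k ∈ Finset.range (Fintype.card K), X 0 ^ k * rename Fin.succ (B k) by
    have hF : ∀ u ∈ F.support, _ := fun u hu =>
      H F.totalDegree u (coeff u F) (le_totalDegree hu)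
    generalize F.totalDegree = d at hF
    rw [F.as_sum]
    refine Finset.sum_induction (fun u => monomial u (coeff u F)) (fun G =>
      ∃ (A : MvPolynomial (Fin (n + 1)) K) (B : ℕ → MvPolynomial (Fin n) K),
      (∀ k, (B k).totalDegree ≤ d) ∧
      G = Polynomial.aeval (X 0) (fieldPoly K) * A
        + ∑ k ∈ Finset.range (Fintype.card K), X 0 ^ k * rename Fin.succ (B k)) ?_ ?_ hF
    · rintro _ _ ⟨A, B, hB, rfl⟩ ⟨A', B', hB', rfl⟩
      refine ⟨A + A', fun k => B k + B' k, fun k =>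
        (totalDegree_add _ _).trans (max_le (hB k) (hB' k)), ?_⟩
      simp only [map_add, mul_add, Finset.sum_add_distrib]
      ring
    · exact ⟨0, 0, by simp, by simp⟩
  intro d u c hu
  set r := (Polynomial.X ^ (u 0) : Polynomial K) %ₘ fieldPoly K
  set t := (Polynomial.X ^ (u 0) : Polynomial K) /ₘ fieldPoly K
  have h1 : r + fieldPoly K * t = Polynomial.X ^ (u 0) :=
    Polynomial.modByMonic_add_div _ _
  have hmon : monomial u c
      = (X 0 ^ (u 0) * rename Fin.succ (monomial u.tail c) : MvPolynomial (Fin (n + 1)) K) := by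
    rw [monomial_eq, monomial_eq, Finsupp.prod_fintype _ _ (by simp),
      Finsupp.prod_fintype _ _ (by simp), Fin.prod_univ_succ]
    simp only [map_mul, map_prod, map_pow, rename_X, rename_C, Finsupp.tail_apply]
    ring
  refine ⟨Polynomial.aeval (X 0) t * rename Fin.succ (monomial u.tail c),
    fun k => C (r.coeff k) * monomial u.tail c, fun k => ?_, ?_⟩
  · simp only [C_mul_monomial]
    refine (totalDegree_monomial_le _ _).trans (le_trans ?_ hu)
    rw [Finsupp.sum_fintype _ _ (by simp), Finsupp.sum_fintype _ _ (by simp), Fin.sum_univ_succ]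
    simp [Finsupp.tail_apply]
  · have hdeg : r.natDegree < Fintype.card K := by
      rw [← natDegree_fieldPoly]
      apply Polynomial.natDegree_modByMonic_lt _ (fieldPoly_monic K)
      intro h
      have := natDegree_fieldPoly K
      rw [h, Polynomial.natDegree_one] at this
      exact Fintype.card_ne_zero this.symm
    have h2 := congrArg (Polynomial.aeval (X 0 : MvPolynomial (Fin (n + 1)) K)) h1
    rw [map_add, map_mul, map_pow, Polynomial.aeval_X,
      Polynomial.aeval_eq_sum_range' hdeg] at h2
    rw [hmon, ← h2, add_mul, add_comm (Finset.sum _ _ * _), Finset.sum_mul, mul_assoc]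
    congr 1
    apply Finset.sum_congr rfl
    intro k _
    rw [map_mul, rename_C, smul_eq_C_mul]
    ring

theorem totalDegree_aeval_fieldPoly {K : Type} [Field K] [Fintype K] {n : ℕ} :
    (Polynomial.aeval (X 0 : MvPolynomial (Fin (n + 1)) K) (fieldPoly K)).totalDegree
      = Fintype.card K := by
  have h0 : ∀ y : K, (X 0 - C y : MvPolynomial (Fin (n + 1)) K).totalDegree = 1 := by
    intro y
    rw [sub_eq_add_neg, ← C_neg, totalDegree_add_eq_left_of_totalDegree_lt] <;> simp
  have hne : ∀ y : K, (X 0 - C y : MvPolynomial (Fin (n + 1)) K) ≠ 0 := by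
    intro y h
    have := h0 y
    simp [h] at this
  have hs : ∀ S : Finset K,
      (∏ y ∈ S, (X 0 - C y : MvPolynomial (Fin (n + 1)) K)).totalDegree = S.card := by
    classical
    intro S
    induction S using Finset.induction_on with
    | empty => simp
    | insert y S hy ih =>
      rw [Finset.prod_insert hy, totalDegree_mul_of_isDomain (hne y)
        (Finset.prod_ne_zero_iff.2 fun y _ => hne y), ih, h0, Finset.card_insert_of_notMem hy,
        add_comm]
  have : Polynomial.aeval (X 0 : MvPolynomial (Fin (n + 1)) K) (fieldPoly K)
      = ∏ y : K, (X 0 - C y) := by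
    simp [fieldPoly, map_prod, MvPolynomial.algebraMap_eq]
  rw [this, hs, Finset.card_univ]

theorem partialShift_aeval_mul {K : Type} [Field K] {n : ℕ} (P : Fin n → K) (f : Polynomial K)
    (A : MvPolynomial (Fin (n + 1)) K) :
    partialShift P (Polynomial.aeval (X 0) f * A) = C f * partialShift P A := by
  rw [map_mul, ← Polynomial.aeval_algHom_apply]
  congr 1
  have : partialShift P (X 0) = C Polynomial.X := by simp [partialShift]
  rw [this]
  have h : Polynomial.aeval (C Polynomial.X : MvPolynomial (Fin n) (Polynomial K))
      = IsScalarTower.toAlgHom K (Polynomial K) (MvPolynomial (Fin n) (Polynomial K)) := by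
    apply Polynomial.algHom_ext
    simp [MvPolynomial.algebraMap_eq]
  rw [h]
  rfl

theorem partialShift_rename_succ {K : Type} [Field K] {n : ℕ} (P : Fin n → K)
    (b : MvPolynomial (Fin n) K) :
    partialShift P (rename Fin.succ b) = map Polynomial.C (shiftBy P b) := by
  have h : (partialShift P).comp (rename Fin.succ)
      = (MvPolynomial.mapAlgHom (Polynomial.CAlgHom (R := K))).comp (shiftBy P) := by
    apply MvPolynomial.algHom_ext
    intro l
    simp [partialShift, shiftBy]
  have := DFunLike.congr_fun h b
  exact this

/-- A polynomial of degree less than `s * q` vanishing with multiplicity at least `s` on all of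
`K^n` is zero: the multiplicity Schwartz–Zippel lemma in the case needed here. -/
theorem eq_zero_of_vanishesToOrder {K : Type} [Field K] [Fintype K] (n : ℕ) :
    ∀ (s : ℕ) (F : MvPolynomial (Fin n) K), F.totalDegree < s * Fintype.card K →
      VanishesToOrder s F → F = 0 := by
  induction n with
  | zero =>
    intro s F hd hF
    have hs : 0 < s := by
      rcases Nat.eq_zero_or_pos s with rfl | h
      · simp at hd
      · exact h
    have := hF Fin.elim0 0 (by simpa using hs)
    rw [eq_C_of_isEmpty F] at this ⊢
    simpa [shiftBy, MvPolynomial.algebraMap_eq] using this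
  | succ n ihn =>
    intro s
    induction s with
    | zero => intro F hd; simp at hd
    | succ s ihs =>
      intro F hd hF
      rw [vanishesToOrder_succ_iff] at hF
      obtain ⟨A, B, hB, hFA⟩ := exists_divMod F
      have hexp : ∀ (P : Fin n → K) (a : Fin n →₀ ℕ), coeff a (partialShift P F)
          = fieldPoly K * coeff a (partialShift P A)
            + ∑ k ∈ Finset.range (Fintype.card K),
              Polynomial.monomial k (coeff a (shiftBy P (B k))) := by
        intro P a
        conv_lhs => rw [hFA]
        rw [map_add, coeff_add, partialShift_aeval_mul, coeff_C_mul, map_sum, coeff_sum]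
        congr 1
        apply Finset.sum_congr rfl
        intro k _
        have hX : partialShift P (X 0) = C Polynomial.X := by simp [partialShift]
        rw [map_mul, map_pow, hX, partialShift_rename_succ, ← C_pow, coeff_C_mul, coeff_map,
          mul_comm, Polynomial.C_mul_X_pow_eq_monomial]
      -- Modulo `Y^q - Y` only the remainder survives, and its `Y`-degree is below `q`.
      have hB0 : ∀ k ∈ Finset.range (Fintype.card K), B k = 0 := by
        intro k hk
        refine ihn (s + 1) (B k) ((hB k).trans_lt hd) fun P a ha => ?_
        have h1 : fieldPoly K ∣ ∑ k ∈ Finset.range (Fintype.card K),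
              Polynomial.monomial k (coeff a (shiftBy P (B k))) := by
          rw [← (dvd_add_right (Dvd.intro _ rfl) :
            fieldPoly K ∣ fieldPoly K * coeff a (partialShift P A) + _ ↔ _), ← hexp]
          exact (dvd_pow_self _ (by omega)).trans (hF P a)
        have h2 := Polynomial.eq_zero_of_dvd_of_degree_lt h1 (by
          rw [Polynomial.degree_eq_natDegree (fieldPoly_monic K).ne_zero, natDegree_fieldPoly,
            Polynomial.degree_lt_iff_coeff_zero]
          intro j hj
          rw [Polynomial.finsetSum_coeff]
          refine Finset.sum_eq_zero fun i hi => ?_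
          rw [Polynomial.coeff_monomial, if_neg]
          have := Finset.mem_range.1 hi
          omega)
        have h3 := congrArg (fun f => Polynomial.coeff f k) h2
        simpa [Polynomial.finsetSum_coeff, Polynomial.coeff_monomial, Finset.mem_range.1 hk,
          hk] using h3
      have hFA' : F = Polynomial.aeval (X 0) (fieldPoly K) * A := by
        rw [Finset.sum_eq_zero fun k hk => by rw [hB0 k hk]; simp, add_zero] at hFA
        exact hFA
      by_cases hA : A = 0
      · rw [hFA', hA, mul_zero]
      refine absurd (ihs A ?_ ?_) hA
      · have hne : Polynomial.aeval (X 0 : MvPolynomial (Fin (n + 1)) K) (fieldPoly K) ≠ 0 := by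
          intro h
          have := totalDegree_aeval_fieldPoly (K := K) (n := n)
          rw [h] at this
          simp [eq_comm] at this
        rw [hFA', totalDegree_mul_of_isDomain hne hA, totalDegree_aeval_fieldPoly] at hd
        rw [add_mul] at hd
        omega
      · rw [vanishesToOrder_succ_iff]
        intro P a
        rcases Nat.lt_or_ge (∑ l, a l) (s + 1) with h | h
        · have h1 := hF P a
          rw [hFA', partialShift_aeval_mul, coeff_C_mul,
            show s + 1 - ∑ l, a l = (s - ∑ l, a l) + 1 by omega, pow_succ'] at h1
          exact (mul_dvd_mul_iff_left (fieldPoly_monic K).ne_zero).1 h1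
        -- Beyond order `s` the truncated exponent is `0` and there is nothing to prove.
        · rw [Nat.sub_eq_zero_of_le (by omega), pow_zero]
          exact one_dvd _

/-! ### The dimension count -/

theorem sum_multichoose (m d : ℕ) :
    ∑ k ∈ Finset.range (d + 1), m.multichoose k = (m + 1).multichoose d := by
  induction d with
  | zero => simp
  | succ d ih => rw [Finset.sum_range_succ, ih, Nat.multichoose_succ_succ, add_comm]

theorem finrank_restrictTotalDegree (K : Type) [Field K] (m d : ℕ) :
    Module.finrank K (restrictTotalDegree (Fin m) K d) = (m + d).choose m := by
  have hset : {n : Fin m →₀ ℕ | (n.sum fun _ e => e) ≤ d}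
      = ((Finset.range (d + 1)).biUnion fun k =>
          (Finset.univ : Finset (Fin m)).finsuppAntidiag k : Finset (Fin m →₀ ℕ)) := by
    ext n
    simp [Finset.mem_finsuppAntidiag, Finsupp.sum_fintype]
  unfold restrictTotalDegree
  rw [hset, Module.finrank_eq_nat_card_basis (basisRestrictSupport K _)]
  simp only [SetLike.coe_sort_coe, Nat.card_eq_fintype_card, Fintype.card_coe]
  rw [Finset.card_biUnion]
  · simp only [Finset.card_finsuppAntidiag_nat_eq_multichoose, Finset.card_univ, Fintype.card_fin]
    rw [sum_multichoose, Nat.multichoose_eq, show m + 1 + d - 1 = m + d by omega,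
      Nat.choose_symm_add]
  · intro i _ j _ hij
    refine Finset.disjoint_left.2 ?_
    intro n hn hn'
    rw [Finset.mem_finsuppAntidiag] at hn hn'
    exact hij (hn.1.symm.trans hn'.1)

/-- The multiplicity code `MRM^s_d`, i.e. the image of
`F ↦ ((H(F,i)(P))_{|i|<s})_{P ∈ F_q^m}` on polynomials of total degree at most `d`,
is an `F_q`-subspace of dimension `C(m+d, m)`. -/
theorem stmt12 (q m s d : ℕ) (hq : IsPrimePow q) (hm : 1 ≤ m) (hs : 1 ≤ s)
    (hd : d < s * q)
    (K : Type) [Field K] [Fintype K] (hK : Fintype.card K = q) :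
    ∃ W : Submodule K ((Fin m → K) → {i : Fin m →₀ ℕ // (∑ l, i l) < s} → K),
      (W : Set ((Fin m → K) → {i : Fin m →₀ ℕ // (∑ l, i l) < s} → K))
        = {c | ∃ F : MvPolynomial (Fin m) K, F.totalDegree ≤ d ∧
            ∀ (P : Fin m → K) (i : {i : Fin m →₀ ℕ // (∑ l, i l) < s}),
              c P i = MvPolynomial.eval P (hasseDerivM (i : Fin m →₀ ℕ) F)} ∧
      Module.finrank K W = Nat.choose (m + d) m := by
  let ev : MvPolynomial (Fin m) K →ₗ[K]
      ((Fin m → K) → {i : Fin m →₀ ℕ // (∑ l, i l) < s} → K) :=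
    LinearMap.pi fun P => LinearMap.pi fun i =>
      (lcoeff K (i : Fin m →₀ ℕ)).comp (shiftBy P).toLinearMap
  have hev : ∀ F P i, ev F P i = eval P (hasseDerivM (i : Fin m →₀ ℕ) F) := fun F P i =>
    (eval_hasseDerivM_s12 _ _ _).symm
  refine ⟨(restrictTotalDegree (Fin m) K d).map ev, ?_, ?_⟩
  · ext c
    constructor
    · rintro ⟨F, hF, rfl⟩
      exact ⟨F, (mem_restrictTotalDegree _ _ _).1 hF, hev F⟩
    · rintro ⟨F, hF, hc⟩
      refine ⟨F, (mem_restrictTotalDegree _ _ _).2 hF, ?_⟩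
      funext P i
      rw [hev, hc]
  · rw [← finrank_restrictTotalDegree K m d]
    refine (LinearEquiv.finrank_eq (LinearEquiv.ofBijective
      (ev.submoduleMap (restrictTotalDegree (Fin m) K d)) ⟨?_, ?_⟩)).symm
    · rw [← LinearMap.ker_eq_bot, LinearMap.ker_eq_bot']
      rintro ⟨F, hF⟩ h
      have h0 : ev F = 0 := congrArg Subtype.val h
      apply Subtype.ext
      refine eq_zero_of_vanishesToOrder m s F ?_ fun P a ha => ?_
      · rw [hK]
        exact ((mem_restrictTotalDegree _ _ _).1 hF).trans_lt hd
      · exact congrFun (congrFun h0 P) ⟨a, ha⟩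
    · exact LinearMap.submoduleMap_surjective _ _
end

section
/- Let q be a prime power with an enumeration F_q = {α_0,...,α_{q−1}}, let s ≥ 1 and d < sq, and for 0 ≤ j ≤ s−1 set d_j := min(q−1, d − jq) and I_{d_j} := {α_0, α_1, ..., α_{d_j}} (empty if d_j < 0). Then the F_q-linear map sending a polynomial F ∈ F_q[X] of degree at most d to the tuple (H(F,j)(α_i)) indexed by pairs (j,i) with 0 ≤ j ≤ s−1 and 0 ≤ i ≤ d_j, where H(F,j) is the j-th (univariate) Hasse derivative of F, is a bijection onto F_q^{d+1}. In particular, {(j, α_i) : 0 ≤ j ≤ s−1, 0 ≤ i ≤ d_j} is an information set of the derivative code (the m = 1 multiplicity code) of order s and degree d. -/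
/-!
The index set is `{(j, i) : j q + i ≤ d}`, which Euclidean division by `q` identifies with
`{0, …, d}`. Counted column by column, the column of `i` is `{0, …, m_i - 1}` with
`m_i = (d + q - i) / q`, so `∑ m_i = d + 1`.

Injectivity: if all prescribed Hasse derivatives of `F` vanish, then `F` vanishes to order at least
`m_i` at each `α_i`, because Hasse derivatives at `α` are the Taylor coefficients at `α`
(`pow_dvd_of_hasseDeriv`). The powers `(X - α_i) ^ m_i` are pairwise coprime, so their product, of
degree `d + 1`, divides `F`; as `deg F ≤ d`, this forces `F = 0`. Bijectivity follows since both
sides have `q ^ (d + 1)` elements.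
-/

open Polynomial

theorem pow_dvd_of_hasseDeriv {K : Type} [Field K] (F : K[X]) (a : K) (m : ℕ)
    (h : ∀ j < m, (hasseDeriv j F).eval a = 0) : (X - C a) ^ m ∣ F := by
  have h1 : X ^ m ∣ taylor a F := by
    rw [X_pow_dvd_iff]
    intro j hj
    rw [taylor_coeff]
    exact h j hj
  obtain ⟨G, hG⟩ := h1
  refine ⟨taylor (-a) G, taylor_injective a ?_⟩
  rw [hG, taylor_mul, taylor_pow, taylor_taylor]
  simp [taylor_apply]

/-- A nonzero polynomial cannot have more zeros, counted with prescribed multiplicities at distinct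
points, than its degree. -/
theorem eq_zero_of_hasseDeriv_eq_zero_of_natDegree_lt {K ι : Type} [Field K] [Fintype ι]
    (a : ι → K) (ha : Function.Injective a) (m : ι → ℕ) (F : K[X])
    (hF : F.natDegree < ∑ i, m i)
    (h : ∀ i, ∀ j < m i, (hasseDeriv j F).eval (a i) = 0) : F = 0 := by
  have hdvd : ∏ i, (X - C (a i)) ^ m i ∣ F :=
    Fintype.prod_dvd_of_coprime
      (fun i j hij => (pairwise_coprime_X_sub_C ha hij).pow)
      (fun i => pow_dvd_of_hasseDeriv F (a i) (m i) (h i))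
  refine eq_zero_of_dvd_of_natDegree_lt hdvd ?_
  rw [natDegree_prod_of_monic _ _ fun i _ => (monic_X_sub_C _).pow _]
  simpa using hF

/-- The index set of pairs `(j, i)` with `j ≤ s - 1` and `i ≤ d_j`. -/
abbrev InfoIndex (q s d : ℕ) : Type :=
  {x : Fin s × Fin q // (x.1 : ℕ) * q ≤ d ∧ (x.2 : ℕ) ≤ min (q - 1) (d - (x.1 : ℕ) * q)}

theorem infoIndex_iff {q d j i : ℕ} (hi : i < q) :
    (j * q ≤ d ∧ i ≤ min (q - 1) (d - j * q)) ↔ j * q + i ≤ d := by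
  rw [le_min_iff]
  omega

/-- Euclidean division by `q`: the pair `(j, i)` corresponds to `j q + i ∈ {0, …, d}`. -/
theorem card_infoIndex (q s d : ℕ) (hq : 0 < q) (hd : d < s * q) :
    Fintype.card (InfoIndex q s d) = d + 1 := by
  rw [← Fintype.card_fin (d + 1)]
  refine Fintype.card_congr
    { toFun := fun x => ⟨x.1.1 * q + x.1.2,
        Nat.lt_succ_of_le ((infoIndex_iff x.1.2.2).1 x.2)⟩
      invFun := fun n => ⟨(⟨n / q, ?_⟩, ⟨n % q, Nat.mod_lt _ hq⟩), ?_⟩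
      left_inv := ?_
      right_inv := ?_ }
  · have := n.2
    rw [Nat.div_lt_iff_lt_mul hq]
    omega
  · refine (infoIndex_iff (Nat.mod_lt _ hq)).2 ?_
    have := n.2
    have := Nat.div_add_mod' n q
    simp only
    omega
  · rintro ⟨⟨j, i⟩, hx⟩
    have h1 : ((j : ℕ) * q + i) / q = j := by
      rw [Nat.mul_comm, Nat.mul_add_div hq, Nat.div_eq_of_lt i.2, add_zero]
    have h2 : ((j : ℕ) * q + i) % q = i := by
      rw [Nat.mul_add_mod', Nat.mod_eq_of_lt i.2]
    simp [h1, h2]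
  · intro n
    ext
    exact Nat.div_add_mod' n q

theorem lt_column_iff {q d j i : ℕ} (hi : i < q) :
    j < (d + q - i) / q ↔ j * q + i ≤ d := by
  rw [← Nat.succ_le_iff, Nat.le_div_iff_mul_le (by omega), Nat.succ_mul]
  omega

/-- Column-by-column count of the index set. -/
theorem sum_column (q s d : ℕ) (hq : 0 < q) (hd : d < s * q) :
    ∑ i : Fin q, (d + q - (i : ℕ)) / q = d + 1 := by
  rw [← card_infoIndex q s d hq hd]
  have h : Fintype.card (Σ i : Fin q, Fin ((d + q - (i : ℕ)) / q)) =
      ∑ i : Fin q, (d + q - (i : ℕ)) / q := by simp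
  rw [← h]
  refine Fintype.card_congr
    { toFun := fun y => ⟨(⟨y.2, ?_⟩, y.1),
        (infoIndex_iff y.1.2).2 ((lt_column_iff y.1.2).1 y.2.2)⟩
      invFun := fun x => ⟨x.1.2, ⟨x.1.1,
        (lt_column_iff x.1.2.2).2 ((infoIndex_iff x.1.2.2).1 x.2)⟩⟩
      left_inv := fun _ => rfl
      right_inv := fun _ => rfl }
  have := (lt_column_iff y.1.2).1 y.2.2
  exact lt_of_mul_lt_mul_right (a := q) (by omega) (Nat.zero_le _)

/-- Polynomials of degree at most `d` correspond to their `d + 1` coefficients. -/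
noncomputable def natDegreeLeEquiv (K : Type) [Field K] (d : ℕ) :
    {F : K[X] // F.natDegree ≤ d} ≃ (Fin (d + 1) → K) :=
  (Equiv.subtypeEquivRight fun F => by
    rw [mem_degreeLT, natDegree_le_iff_coeff_eq_zero, degree_lt_iff_coeff_zero]; rfl).trans
    (degreeLTEquiv K (d + 1)).toEquiv

/-- Systematic encoding for derivative codes (`m = 1` multiplicity codes):
with `F_q` enumerated by `e : Fin q ≃ K`, `d_j := min (q-1) (d - jq)` and
`I_{d_j} := {α_0, …, α_{d_j}}` (empty when `d_j < 0`, i.e. when `jq > d`), the map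
sending a polynomial `F` of degree at most `d` to the tuple `(H(F,j)(α_i))_{(j,i)}`,
for `0 ≤ j ≤ s-1` and `0 ≤ i ≤ d_j`, is a bijection onto `F_q^{d+1}`:
the index set has exactly `d+1` elements and the map is bijective. -/
theorem stmt15 (q s d : ℕ) (hq : IsPrimePow q) (hs : 1 ≤ s) (hd : d < s * q)
    (K : Type) [Field K] [Fintype K] (hK : Fintype.card K = q) (e : Fin q ≃ K) :
    Nat.card {x : Fin s × Fin q //
        (x.1 : ℕ) * q ≤ d ∧ (x.2 : ℕ) ≤ min (q - 1) (d - (x.1 : ℕ) * q)} = d + 1 ∧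
    Function.Bijective
      (fun F : {F : Polynomial K // F.natDegree ≤ d} =>
        fun ji : {x : Fin s × Fin q //
            (x.1 : ℕ) * q ≤ d ∧ (x.2 : ℕ) ≤ min (q - 1) (d - (x.1 : ℕ) * q)} =>
          Polynomial.eval (e (ji : Fin s × Fin q).2)
            (Polynomial.hasseDeriv ((ji : Fin s × Fin q).1 : ℕ) (F : Polynomial K))) := by
  have hq0 : 0 < q := hq.pos
  have hcard := card_infoIndex q s d hq0 hd
  refine ⟨by rw [Nat.card_eq_fintype_card]; exact hcard, ?_⟩
  classical
  let : Fintype {F : K[X] // F.natDegree ≤ d} := Fintype.ofEquiv _ (natDegreeLeEquiv K d).symm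
  rw [Fintype.bijective_iff_injective_and_card]
  constructor
  · rintro ⟨F, hF⟩ ⟨G, hG⟩ hFG
    refine Subtype.ext (sub_eq_zero.1 ?_)
    refine eq_zero_of_hasseDeriv_eq_zero_of_natDegree_lt e e.injective
      (fun i => (d + q - (i : ℕ)) / q) (F - G) ?_ ?_
    · rw [sum_column q s d hq0 hd]
      exact Nat.lt_succ_of_le ((natDegree_sub_le_of_le hF hG).trans (max_self d).le)
    · intro i j hj
      have hle := (lt_column_iff i.2).1 hj
      have hjs : j < s := lt_of_mul_lt_mul_right (a := q) (by omega) (Nat.zero_le _)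
      have := congrFun hFG ⟨(⟨j, hjs⟩, i), (infoIndex_iff i.2).2 hle⟩
      rw [map_sub, eval_sub, sub_eq_zero]
      exact this
  · rw [Fintype.card_congr (natDegreeLeEquiv K d), Fintype.card_fun, Fintype.card_fun, hcard,
      Fintype.card_fin]
end

section
/- Let q be a prime power, m ≥ 1, and 0 ≤ d ≤ m(q−1). The Reed-Muller code RM_d over F_q, i.e., the image of the evaluation map F ↦ (F(P))_{P ∈ F_q^m} on polynomials F ∈ F_q[X_1,...,X_m] of total degree at most d, has F_q-dimension equal to |L_d|, the number of tuples (i_1,...,i_m) ∈ ℕ^m with 0 ≤ i_l ≤ q−1 for all l and i_1 + ... + i_m ≤ d. -/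
/-!
The evaluations of the reduced monomials `X^i`, `i ∈ L_d`, form a basis of `RM_d`.

They span it: `x ^ q = x` on `F_q`, so every exponent `e` can be lowered to some `e' < q` with
`e' ≤ e` without changing the power function (`exists_reduced_exponent`). Hence each monomial of
total degree at most `d` agrees, as a function, with a reduced monomial of total degree at most `d`.

They are linearly independent (`linearIndependent_monomialFun`): a polynomial of degree at most
`q - 1` in each variable that vanishes on all of `F_q^m` is zero
(`MvPolynomial.eq_zero_of_eval_eq_zero`).
-/

open MvPolynomial

/-- The function `P ↦ ∏ l, P_l ^ i_l` on `K^m` defined by the reduced monomial with exponent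
tuple `i`; being reduced (each exponent less than `q`) is encoded by `Fin q`. -/
def monomialFun (K : Type) [Field K] {m q : ℕ} (i : Fin m → Fin q) : (Fin m → K) → K :=
  fun P => ∏ l, P l ^ (i l : ℕ)

lemma exists_reduced_exponent (K : Type) [Field K] [Fintype K] (e : ℕ) :
    ∃ e' : Fin (Fintype.card K), (e' : ℕ) ≤ e ∧ ∀ x : K, x ^ (e' : ℕ) = x ^ e := by
  induction e using Nat.strong_induction_on with
  | _ e ih =>
    by_cases h : e < Fintype.card K
    · exact ⟨⟨e, h⟩, le_rfl, fun _ => rfl⟩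
    · have h1 : 1 < Fintype.card K := Fintype.one_lt_card
      obtain ⟨e', hle, he'⟩ := ih (e - Fintype.card K + 1) (by omega)
      refine ⟨e', by omega, fun x => ?_⟩
      rw [he' x, pow_succ]
      nth_rewrite 2 [← FiniteField.pow_card x]
      rw [← pow_add, Nat.sub_add_cancel (by omega)]

lemma linearIndependent_monomialFun (K : Type) [Field K] [Fintype K] (m : ℕ) :
    LinearIndependent K
      (fun i : Fin m → Fin (Fintype.card K) => monomialFun K i) := by
  classical
  rw [Fintype.linearIndependent_iff]
  intro c hc j
  let E : (Fin m → Fin (Fintype.card K)) → (Fin m →₀ ℕ) :=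
    fun i => Finsupp.equivFunOnFinite.symm fun l => (i l : ℕ)
  have hE : Function.Injective E := by
    intro a b hab
    funext l
    exact Fin.ext (DFunLike.congr_fun hab l)
  have hp : (∑ i, monomial (E i) (c i)) = 0 := by
    refine eq_zero_of_eval_eq_zero (Fin m) K _ (fun v => ?_) (Submodule.sum_mem _ fun i _ => ?_)
    · have := congrFun hc v
      simpa [monomialFun, eval_monomial, Finsupp.prod_fintype, E] using this
    · rw [mem_restrictDegree]
      intro s hs l
      rw [Finset.mem_singleton.mp (support_monomial_subset hs)]
      exact Nat.le_sub_one_of_lt (i l).isLt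
  have := congrArg (coeff (E j)) hp
  simpa [coeff_sum, coeff_monomial, hE.eq_iff] using this

lemma map_restrictTotalDegree_eq_span (K : Type) [Field K] [Fintype K] (m d : ℕ) :
    (restrictTotalDegree (Fin m) K d).map (evalₗ K (Fin m)) =
      Submodule.span K (Set.range fun i :
        {i : Fin m → Fin (Fintype.card K) // ∑ l, (i l : ℕ) ≤ d} => monomialFun K i.1) := by
  apply le_antisymm
  · rintro _ ⟨F, hF, rfl⟩
    have hF' : F.totalDegree ≤ d := (mem_restrictTotalDegree _ _ _).mp hF
    rw [F.as_sum, map_sum]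
    refine Submodule.sum_mem _ fun s hs => ?_
    choose r hr hpow using exists_reduced_exponent K
    have hdeg : ∑ l, (r (s l) : ℕ) ≤ d := by
      refine (Finset.sum_le_sum fun l _ => hr (s l)).trans ?_
      have := (le_totalDegree hs).trans hF'
      rwa [Finsupp.sum_fintype _ _ (fun _ => rfl)] at this
    have heq : evalₗ K (Fin m) (monomial s (coeff s F)) =
        coeff s F • monomialFun K fun l => r (s l) := by
      funext P
      simp [evalₗ_apply, eval_monomial, monomialFun, hpow, Finsupp.prod_fintype]
    rw [heq]
    exact Submodule.smul_mem _ _ (Submodule.subset_span ⟨⟨_, hdeg⟩, rfl⟩)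
  · rw [Submodule.span_le]
    rintro _ ⟨⟨i, hi⟩, rfl⟩
    refine ⟨monomial (Finsupp.equivFunOnFinite.symm fun l => (i l : ℕ)) 1, ?_, ?_⟩
    · refine (mem_restrictTotalDegree _ _ _).mpr ?_
      rw [totalDegree_monomial _ one_ne_zero, Finsupp.sum_fintype _ _ (fun _ => rfl)]
      exact hi
    · funext P
      simp [evalₗ_apply, eval_monomial, monomialFun, Finsupp.prod_fintype]

/-- For `0 ≤ d ≤ m(q-1)`, the Reed–Muller code `RM_d` over `F_q` — the image of the
evaluation map `F ↦ (F(P))_{P ∈ F_q^m}` on polynomials of total degree at most `d` —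
is an `F_q`-subspace of dimension `|L_d|`, the number of tuples `(i_1,…,i_m)` with
`0 ≤ i_l ≤ q-1` and `i_1 + ⋯ + i_m ≤ d`. -/
theorem stmt16 (q m d : ℕ) (hq : IsPrimePow q) (hm : 1 ≤ m) (hd : d ≤ m * (q - 1))
    (K : Type) [Field K] [Fintype K] (hK : Fintype.card K = q) :
    ∃ W : Submodule K ((Fin m → K) → K),
      (W : Set ((Fin m → K) → K))
        = {c | ∃ F : MvPolynomial (Fin m) K, F.totalDegree ≤ d ∧
            ∀ P : Fin m → K, c P = MvPolynomial.eval P F} ∧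
      Module.finrank K W
        = (Finset.univ.filter
            (fun i : Fin m → Fin q => ∑ l, ((i l : ℕ)) ≤ d)).card := by
  subst hK
  refine ⟨(restrictTotalDegree (Fin m) K d).map (evalₗ K (Fin m)), ?_, ?_⟩
  · ext c
    constructor
    · rintro ⟨F, hF, rfl⟩
      exact ⟨F, (mem_restrictTotalDegree _ _ _).mp hF, fun P => rfl⟩
    · rintro ⟨F, hF, hc⟩
      exact ⟨F, (mem_restrictTotalDegree _ _ _).mpr hF, (funext hc).symm⟩
  · rw [map_restrictTotalDegree_eq_span, finrank_span_eq_card, Fintype.card_subtype]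
    exact (linearIndependent_monomialFun K m).comp _ Subtype.val_injective
end
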